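/- arXiv:math/0606092 — 3 statements merged into one kernel-verified Lean document; each statement's English description precedes it below -/
import Mathlib

section
/- Let q be a real number and let (p_n)_{n≥0} be an arbitrary sequence of real numbers. Define β_{n,k} for integers n, k by β_{n,k} = 0 whenever n < 0 or k > n, β_{n,0} = p_n for n ≥ 0, and the recurrence [k+1]_q β_{n,k+1} = q^k [n−k]_q β_{n,k} + [n]_q β_{n−1,k}. Then for all 0 ≤ k ≤ n one has β_{n,k} = [n choose k]_q · Σ_{j=0}^{k} [k choose j]_q q^{(k−j)(k−j−1)/2} p_{n−j}. -/
/-- `[n]_q = 1 + q + ⋯ + q^{n-1}`. -/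
noncomputable def qnum (q : ℝ) (n : ℕ) : ℝ := ∑ i ∈ Finset.range n, q ^ i

/-- `[n]_q! = [1]_q [2]_q ⋯ [n]_q`. -/
noncomputable def qfact (q : ℝ) (n : ℕ) : ℝ := ∏ i ∈ Finset.range n, qnum q (i + 1)

/-- q-binomial coefficient `[n choose k]_q`, with the convention that it is `0` for `k > n`. -/
noncomputable def qbinom (q : ℝ) (n k : ℕ) : ℝ :=
  if k ≤ n then qfact q n / (qfact q (n - k) * qfact q k) else 0

/-- `[n]_q` for an integer index, with value `0` for negative indices. -/
noncomputable def qnumZ (q : ℝ) (n : ℤ) : ℝ :=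
  if 0 ≤ n then ∑ i ∈ Finset.range n.toNat, q ^ i else 0

theorem aux_qnum_pos (q : ℝ) (hq0 : 0 < q) (n : ℕ) : 0 < qnum q (n + 1) := by
  unfold qnum
  exact Finset.sum_pos (fun i _ => pow_pos hq0 i) ⟨0, by simp⟩

theorem aux_qfact_pos (q : ℝ) (hq0 : 0 < q) (n : ℕ) : 0 < qfact q n :=
  Finset.prod_pos (fun i _ => aux_qnum_pos q hq0 i)

theorem aux_qfact_succ (q : ℝ) (n : ℕ) : qfact q (n + 1) = qfact q n * qnum q (n + 1) := by
  unfold qfact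
  rw [Finset.prod_range_succ]

theorem aux_qnum_add (q : ℝ) (a b : ℕ) : qnum q (a + b) = qnum q a + q ^ a * qnum q b := by
  unfold qnum
  rw [Finset.sum_range_add, Finset.mul_sum]
  simp [pow_add]

theorem aux_qbinom_add (q : ℝ) (a b : ℕ) :
    qbinom q (a + b) a = qfact q (a + b) / (qfact q b * qfact q a) := by
  simp [qbinom]

theorem aux_pascal (q : ℝ) (hq0 : 0 < q) (k j : ℕ) (h : j ≤ k) :
    qbinom q (k + 1) (j + 1) = q ^ (j + 1) * qbinom q k (j + 1) + qbinom q k j := by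
  obtain ⟨m, rfl⟩ := Nat.exists_eq_add_of_le h
  have e1 : j + m + 1 = (j + 1) + m := by ring
  have hj := (aux_qfact_pos q hq0 j).ne'
  have hj1 := (aux_qnum_pos q hq0 j).ne'
  rcases m with _ | m
  · have h1 := (aux_qfact_pos q hq0 (j + 1)).ne'
    simp [qbinom]
    have z : qfact q 0 = 1 := by simp [qfact]
    rw [z, one_mul, one_mul, div_self h1, div_self hj]
  · have hm := (aux_qfact_pos q hq0 m).ne'
    have hm1 := (aux_qnum_pos q hq0 m).ne'
    have e2 : j + (m + 1) = (j + 1) + m := by ring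
    have e3 : qbinom q (j + (m + 1)) (j + 1)
        = qfact q (j + (m + 1)) / (qfact q m * qfact q (j + 1)) := by
      rw [e2, aux_qbinom_add]
    rw [e3, e1, aux_qbinom_add, aux_qbinom_add, ← e1, aux_qfact_succ, aux_qfact_succ q m,
      aux_qfact_succ q j, e1, aux_qnum_add]
    field_simp
    ring

theorem aux_tri (m : ℕ) : (m + 1) * (m + 1 - 1) / 2 = m * (m - 1) / 2 + m := by
  rw [← Finset.sum_range_id_mul_two, ← Finset.sum_range_id_mul_two] <;> simp [Finset.sum_range_succ]

theorem aux_sum (q : ℝ) (hq0 : 0 < q) (p : ℕ → ℝ) (n k : ℕ) :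
    ∑ j ∈ Finset.range (k + 1 + 1),
      qbinom q (k + 1) j * q ^ ((k + 1 - j) * (k + 1 - j - 1) / 2) * p (n + 1 - j)
    = q ^ k * ∑ j ∈ Finset.range (k + 1),
        qbinom q k j * q ^ ((k - j) * (k - j - 1) / 2) * p (n + 1 - j)
      + ∑ j ∈ Finset.range (k + 1),
        qbinom q k j * q ^ ((k - j) * (k - j - 1) / 2) * p (n - j) := by
  have hg : ∑ j ∈ Finset.range (k + 1),
        qbinom q k j * q ^ ((k - j) * (k - j - 1) / 2) * p (n + 1 - j)
      = ∑ j ∈ Finset.range (k + 1 + 1),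
        qbinom q k j * q ^ ((k - j) * (k - j - 1) / 2) * p (n + 1 - j) := by
    rw [Finset.sum_range_succ _ (k + 1)]
    simp [qbinom]
  rw [hg, Finset.sum_range_succ', Finset.sum_range_succ' _ (k + 1), mul_add, add_right_comm,
    Finset.mul_sum, ← Finset.sum_add_distrib]
  congr 1
  · apply Finset.sum_congr rfl
    intro j hj
    have hjk : j ≤ k := by simpa [Nat.lt_succ_iff] using hj
    rw [aux_pascal q hq0 k j hjk, Nat.add_sub_add_right, Nat.add_sub_add_right]
    rcases hjk.eq_or_lt with rfl | hlt
    · simp [qbinom]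
    · obtain ⟨m, rfl⟩ := Nat.exists_eq_add_of_lt hlt
      have e1 : j + m + 1 - j = m + 1 := by omega
      have e2 : j + m + 1 - (j + 1) = m := by omega
      rw [e1, e2, aux_tri]
      ring
  · have h0 := (aux_qfact_pos q hq0 k).ne'
    have h1 := (aux_qfact_pos q hq0 (k + 1)).ne'
    have e : ∀ r, qfact q r ≠ 0 → qbinom q r 0 = 1 := by
      intro r hr
      simp [qbinom, qfact] at hr ⊢
      exact hr
    simp only [e _ h0, e _ h1, Nat.sub_zero, aux_tri]
    ring

theorem aux_qnumZ (q : ℝ) (n : ℕ) : qnumZ q (n : ℤ) = qnum q n := by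
  simp [qnumZ, qnum]

/-- if `β_{n,k} = 0` for `n < 0` or `k > n`, `β_{n,0} = p_n`, and
`[k+1]_q β_{n,k+1} = q^k [n-k]_q β_{n,k} + [n]_q β_{n-1,k}`, then for `0 ≤ k ≤ n`,
`β_{n,k} = [n choose k]_q ∑_{j=0}^k [k choose j]_q q^{(k-j)(k-j-1)/2} p_{n-j}`. -/
theorem stmt0 (q : ℝ) (hq0 : 0 < q) (hq1 : q ≤ 1)
    (p : ℕ → ℝ) (β : ℤ → ℤ → ℝ)
    (hzero : ∀ n k : ℤ, n < 0 ∨ n < k → β n k = 0)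
    (hinit : ∀ n : ℕ, β n 0 = p n)
    (hrec : ∀ n k : ℤ, 0 ≤ n → 0 ≤ k →
      qnumZ q (k + 1) * β n (k + 1) =
        q ^ k * qnumZ q (n - k) * β n k + qnumZ q n * β (n - 1) k) :
    ∀ n k : ℕ, k ≤ n →
      β n k = qbinom q n k *
        ∑ j ∈ Finset.range (k + 1),
          qbinom q k j * q ^ ((k - j) * (k - j - 1) / 2) * p (n - j) := by
  intro n k
  induction k generalizing n with
  | zero =>
    intro _
    have h0 := (aux_qfact_pos q hq0 n).ne'
    have := hinit n
    simp [qbinom, qfact] at h0 ⊢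
    rw [this, div_self h0, one_mul]
  | succ k ih =>
    intro hk
    obtain ⟨m, rfl⟩ := Nat.exists_eq_add_of_le hk
    have hr := hrec ((k + 1 + m : ℕ) : ℤ) (k : ℤ) (by positivity) (by positivity)
    have z1 : ((k + 1 + m : ℕ) : ℤ) - (k : ℤ) = ((m + 1 : ℕ) : ℤ) := by push_cast; ring
    have z2 : ((k + 1 + m : ℕ) : ℤ) - 1 = ((k + m : ℕ) : ℤ) := by push_cast; ring
    have z3 : (k : ℤ) + 1 = ((k + 1 : ℕ) : ℤ) := by push_cast; ring
    rw [z1, z2, z3, aux_qnumZ, aux_qnumZ, aux_qnumZ, zpow_natCast,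
      ih (k + 1 + m) (by omega), ih (k + m) (by omega)] at hr
    have e1 : k + 1 + m = k + m + 1 := by ring
    have e2 : k + 1 + m = k + (m + 1) := by ring
    have hs := aux_sum q hq0 p (k + m) k
    rw [← e1] at hs
    rw [hs]
    have b1 : qbinom q (k + 1 + m) k = qfact q (k + 1 + m) / (qfact q (m + 1) * qfact q k) := by
      rw [e2, aux_qbinom_add]
    have b3 : qfact q (k + 1 + m) = qfact q (k + m) * qnum q (k + 1 + m) := by
      rw [e1, aux_qfact_succ]
    rw [b1, aux_qbinom_add, b3, aux_qfact_succ] at hr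
    rw [aux_qbinom_add, b3, aux_qfact_succ q k]
    have hk1 := (aux_qnum_pos q hq0 k).ne'
    have hm1 := (aux_qnum_pos q hq0 m).ne'
    have hkf := (aux_qfact_pos q hq0 k).ne'
    have hmf := (aux_qfact_pos q hq0 m).ne'
    apply mul_left_cancel₀ hk1
    rw [hr]
    field_simp
end

section
/- Let q = 1, η > 0, θ ≥ 0, τ ≥ 0 and fix s > 0 and an integer k ≥ 0. Then there exists a constant c ≥ 0 (depending on k, s and the parameters, but not on n) such that |p_n(x_k(s); s)| ≤ c n^k for all n ≥ 1. -/
/-- `a_n = η⁻¹ + θ[n]_q + [n]_q² ητ`. -/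
noncomputable def aCoef (η θ τ q : ℝ) (n : ℕ) : ℝ :=
  η⁻¹ + θ * qnum q n + (qnum q n) ^ 2 * η * τ

/-- `b_n(t) = (tη + θ + ([n]_q + [n-1]_q)ητ)[n]_q`. -/
noncomputable def bCoef (η θ τ q t : ℝ) (n : ℕ) : ℝ :=
  (t * η + θ + (qnum q n + qnum q (n - 1)) * η * τ) * qnum q n

/-- `c_n(t) = η(t + τ[n-1]_q)[n]_q`. -/
noncomputable def cCoef (η τ q t : ℝ) (n : ℕ) : ℝ :=
  η * (t + τ * qnum q (n - 1)) * qnum q n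

/-- `A_n(x,s) = a_n + q^n x - sη q^n [n]_q`. -/
noncomputable def ACoef (η θ τ q x s : ℝ) (n : ℕ) : ℝ :=
  aCoef η θ τ q n + q ^ n * x - s * η * q ^ n * qnum q n

/-- `x_k(s) = ((sη q^k - θ)[k]_q - η⁻¹ - ητ[k]_q²)/q^k`, the zero of `x ↦ A_k(x,s)`. -/
noncomputable def xPt (η θ τ q s : ℝ) (k : ℕ) : ℝ :=
  ((s * η * q ^ k - θ) * qnum q k - η⁻¹ - η * τ * (qnum q k) ^ 2) / q ^ k

/-- Action of the difference operator on binomial coefficients. -/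
lemma choose_op (η θ τ s : ℝ) (n j : ℕ) :
    (η⁻¹ + θ * n + n ^ 2 * η * τ) * (((n + 1).choose (j + 1) : ℝ) - (n.choose (j + 1) : ℝ))
      - η * (s + τ * ((n : ℝ) - 1)) * n
        * ((n.choose (j + 1) : ℝ) - ((n - 1).choose (j + 1) : ℝ))
    = ((θ - η * s) * ((j : ℝ) + 1) + η * τ * ((j : ℝ) + 1) ^ 2) * (n.choose (j + 1) : ℝ)
      + (η⁻¹ + θ * j + j ^ 2 * η * τ) * (n.choose j : ℝ) := by
  have h1 : ((n + 1).choose (j + 1) : ℝ) = n.choose j + n.choose (j + 1) := by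
    exact_mod_cast Nat.choose_succ_succ n j
  have h2 : (n : ℝ) * ((n.choose (j + 1) : ℝ) - ((n - 1).choose (j + 1) : ℝ))
      = ((j : ℝ) + 1) * n.choose (j + 1) := by
    cases n with
    | zero => simp
    | succ N =>
      have h3 : ((N + 1).choose (j + 1) : ℝ) = N.choose j + N.choose (j + 1) := by
        exact_mod_cast Nat.choose_succ_succ N j
      have h4 : ((N : ℝ) + 1) * N.choose j = (N + 1).choose (j + 1) * ((j : ℝ) + 1) := by
        exact_mod_cast Nat.add_one_mul_choose_eq N j
      simp only [Nat.add_sub_cancel]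
      push_cast
      linear_combination h4 + ((N : ℝ) + 1) * h3
  have h5 : ((n : ℝ) - j) * n.choose j = ((j : ℝ) + 1) * n.choose (j + 1) := by
    rcases le_or_gt j n with h | h
    · have h6 := Nat.choose_succ_right_eq n j
      have h7 : (n.choose (j + 1) : ℝ) * ((j : ℝ) + 1) = n.choose j * ((n - j : ℕ) : ℝ) := by
        exact_mod_cast h6
      rw [Nat.cast_sub h] at h7
      linear_combination -h7
    · rw [Nat.choose_eq_zero_of_lt h, Nat.choose_eq_zero_of_lt (by omega)]
      simp
  rw [h1]
  linear_combination (-η * (s + τ * ((n : ℝ) - 1))) * h2 + (θ + η * τ * (n + j)) * h5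

lemma qnum_one (n : ℕ) : qnum 1 n = n := by simp [qnum]

/-- for `q = 1`, `η > 0`, `θ ≥ 0`, `τ ≥ 0`, `s > 0` and `k ≥ 0`, there is a
constant `c ≥ 0` (independent of `n`) with `|p_n(x_k(s);s)| ≤ c n^k` for all `n ≥ 1`.
(Here the general definitions are specialized at `q = 1`, where `[n]_1 = n`.) -/
theorem stmt10 (η θ τ s : ℝ)
    (hη : 0 < η) (hθ : 0 ≤ θ) (hτ : 0 ≤ τ) (hs : 0 < s)
    (k : ℕ)
    (p : ℕ → ℝ → ℝ)
    (hp0 : ∀ y : ℝ, p 0 y = 1)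
    (hprec : ∀ (n : ℕ) (y : ℝ), y * p n y =
      aCoef η θ τ 1 n * p (n + 1) y + bCoef η θ τ 1 s n * p n y
        + cCoef η τ 1 s n * p (n - 1) y) :
    ∃ c : ℝ, 0 ≤ c ∧ ∀ n : ℕ, 1 ≤ n → |p n (xPt η θ τ 1 s k)| ≤ c * (n : ℝ) ^ k := by
  set e : ℕ → ℝ := fun j => (θ - η * s) * (j : ℝ) + η * τ * (j : ℝ) ^ 2 with he
  set a : ℕ → ℝ := fun n => η⁻¹ + θ * n + n ^ 2 * η * τ with ha
  have hapos : ∀ n, 0 < a n := by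
    intro n
    simp only [ha]
    positivity
  set w : ℕ → ℝ := fun j => ∏ i ∈ Finset.range j, ((e k - e i) / a i) with hw
  have hw0 : w 0 = 1 := by simp [hw]
  have hws : ∀ j, w (j + 1) * a j = (e k - e j) * w j := by
    intro j
    have := (hapos j).ne'
    simp only [hw, Finset.prod_range_succ]
    field_simp
  set U : ℕ → ℕ → ℝ := fun m n => ∑ j ∈ Finset.range (m + 1), w j * (n.choose j : ℝ) with hU
  have hUs : ∀ m n, U (m + 1) n = U m n + w (m + 1) * (n.choose (m + 1) : ℝ) := by
    intro m n
    simp only [hU]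
    rw [Finset.sum_range_succ]
  have hkey : ∀ m n : ℕ, a n * (U m (n + 1) - U m n)
      - η * (s + τ * ((n : ℝ) - 1)) * n * (U m n - U m (n - 1)) - e k * U m n
      = w m * (e m - e k) * (n.choose m : ℝ) := by
    intro m n
    induction m with
    | zero => simp [hU, hw0, he]
    | succ m ih =>
      have h := choose_op η θ τ s n m
      have h2 := hws m
      simp only [hUs]
      have e1 : e (m + 1) = (θ - η * s) * ((m : ℝ) + 1) + η * τ * ((m : ℝ) + 1) ^ 2 := by
        simp [he]
      rw [← e1] at h
      change a n * _ - _ = _ + a m * _ at h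
      linear_combination ih + w (m + 1) * h + (n.choose m : ℝ) * h2
  have hrec : ∀ n : ℕ, a n * (U k (n + 1) - U k n)
      - η * (s + τ * ((n : ℝ) - 1)) * n * (U k n - U k (n - 1)) - e k * U k n = 0 := by
    intro n
    rw [hkey]
    ring
  have hU0 : U k 0 = 1 := by
    simp only [hU]
    rw [Finset.sum_range_succ']
    simp [hw0]
  set x := xPt η θ τ 1 s k with hx
  have hxe : x = -e k - η⁻¹ := by
    simp only [hx, xPt, qnum_one, he]
    simp
    ring
  have hp : ∀ n, p n x = (-1) ^ n * U k n ∧ p (n + 1) x = (-1) ^ (n + 1) * U k (n + 1) := by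
    intro n
    induction n with
    | zero =>
      have h0 : p 0 x = (-1) ^ 0 * U k 0 := by rw [hp0, hU0]; simp
      refine ⟨h0, ?_⟩
      have h1 := hprec 0 x
      have h2 := hrec 0
      have ea : aCoef η θ τ 1 0 = a 0 := by simp only [aCoef, qnum_one, ha]
      rw [ea, hp0] at h1
      simp only [bCoef, cCoef, qnum_one] at h1
      rw [hU0] at h2
      apply mul_left_cancel₀ (hapos 0).ne'
      have ea0 : a 0 = η⁻¹ := by simp [ha]
      simp at h1 h2 ⊢
      linear_combination -h1 + hxe + h2 - ea0
    | succ n ih =>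
      refine ⟨ih.2, ?_⟩
      have h1 := hprec (n + 1) x
      have h2 := hrec (n + 1)
      have ea : aCoef η θ τ 1 (n + 1) = a (n + 1) := by simp only [aCoef, qnum_one, ha]
      have ea0 : a (n + 1) = η⁻¹ + θ * ((n : ℝ) + 1) + ((n : ℝ) + 1) ^ 2 * η * τ := by
        simp [ha]
      rw [ea] at h1
      simp only [bCoef, cCoef, qnum_one, Nat.add_sub_cancel] at h1 h2
      rw [ih.1, ih.2] at h1
      push_cast at h1 h2
      apply mul_left_cancel₀ (hapos (n + 1)).ne'
      rw [hxe] at h1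
      rw [pow_succ (-1 : ℝ) (n + 1), pow_succ (-1 : ℝ) n]
      rw [pow_succ (-1 : ℝ) n] at h1
      rw [hxe]
      linear_combination -h1 - (-1) ^ n * h2 - (-1) ^ n * U k (n + 1) * ea0
  refine ⟨∑ j ∈ Finset.range (k + 1), |w j|, Finset.sum_nonneg fun _ _ => abs_nonneg _, ?_⟩
  intro n hn
  rw [(hp n).1, abs_mul, abs_pow, abs_neg, abs_one, one_pow, one_mul, Finset.sum_mul]
  refine (Finset.abs_sum_le_sum_abs _ _).trans (Finset.sum_le_sum fun j hj => ?_)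
  rw [abs_mul, Nat.abs_cast]
  refine mul_le_mul_of_nonneg_left ?_ (abs_nonneg _)
  have h1 : n.choose j ≤ n ^ k :=
    (Nat.choose_le_pow n j).trans
      (Nat.pow_le_pow_right hn (Nat.lt_succ_iff.mp (Finset.mem_range.mp hj)))
  exact_mod_cast h1
end

section
/- Let 0 ≤ q ≤ 1, η > 0, θ ≥ 0, τ ≥ 0 and fix t > 0. Let μ_t be a probability measure on ℝ with finite moments of all orders such that ∫ p_m(y;t) p_n(y;t) μ_t(dy) = 0 whenever m ≠ n. Then the support of μ_t is contained in [−1/η, ∞); that is, μ_t((−∞, −1/η)) = 0. -/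
open MeasureTheory

open Polynomial

section AlgPart

variable {a b c : ℕ → ℝ} {β : ℝ} {P : ℕ → ℝ[X]} {L : ℝ[X] →ₗ[ℝ] ℝ}

lemma norm_rec
    (hrec : ∀ n, X * P n = a n • P (n + 1) + b n • P n + c n • P (n - 1))
    (horth : ∀ m n, m ≠ n → L (P m * P n) = 0) (n : ℕ) :
    a n * L (P (n + 1) * P (n + 1)) = c (n + 1) * L (P n * P n) := by
  have h1 : L (X * P n * P (n + 1)) = a n * L (P (n + 1) * P (n + 1)) + c n * L (P (n - 1) * P (n + 1)) := by
    rw [hrec n]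
    simp [add_mul, horth n (n + 1) (by omega)]
  have h2 : L (X * P (n + 1) * P n) = c (n + 1) * L (P n * P n) := by
    rw [hrec (n + 1)]
    simp [add_mul, horth (n + 1) n (by omega), horth (n + 1 + 1) n (by omega)]
  have h3 : X * P n * P (n + 1) = X * P (n + 1) * P n := by ring
  rw [horth (n - 1) (n + 1) (by omega)] at h1
  rw [h3, h2] at h1
  linarith

lemma norm_pos (ha : ∀ n, 0 < a n) (hc : ∀ n, 0 < c (n + 1))
    (hrec : ∀ n, X * P n = a n • P (n + 1) + b n • P n + c n • P (n - 1))
    (horth : ∀ m n, m ≠ n → L (P m * P n) = 0) (hP0 : P 0 = 1) (hL : L 1 = 1) (n : ℕ) :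
    0 < L (P n * P n) := by
  induction n with
  | zero => simp [hP0, hL]
  | succ n ih =>
    have h := norm_rec hrec horth n
    have h2 : 0 < a n * L (P (n + 1) * P (n + 1)) := by
      rw [h]; exact mul_pos (hc n) ih
    exact (pos_iff_pos_of_mul_pos h2).1 (ha n)

lemma exists_expand
    (hrec : ∀ n, X * P n = a n • P (n + 1) + b n • P n + c n • P (n - 1))
    (hP0 : P 0 = 1) (f : ℝ[X]) :
    ∃ (u : ℕ → ℝ) (N : ℕ), f = ∑ k ∈ Finset.range (N + 1), u k • P k := by
  have hX : ∀ g ∈ Submodule.span ℝ (Set.range P), X * g ∈ Submodule.span ℝ (Set.range P) := by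
    intro g hg
    induction hg using Submodule.span_induction with
    | mem x hx =>
      obtain ⟨n, rfl⟩ := hx
      rw [hrec n]
      have hm : ∀ n, P n ∈ Submodule.span ℝ (Set.range P) := fun n =>
        Submodule.subset_span ⟨n, rfl⟩
      exact Submodule.add_mem _ (Submodule.add_mem _ (Submodule.smul_mem _ _ (hm _))
        (Submodule.smul_mem _ _ (hm _))) (Submodule.smul_mem _ _ (hm _))
    | zero => simp
    | add x y _ _ hx hy => rw [mul_add]; exact Submodule.add_mem _ hx hy
    | smul r x _ hx => rw [mul_smul_comm]; exact Submodule.smul_mem _ _ hx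
  have hpow : ∀ n : ℕ, (X ^ n : ℝ[X]) ∈ Submodule.span ℝ (Set.range P) := by
    intro n
    induction n with
    | zero => rw [pow_zero, ← hP0]; exact Submodule.subset_span ⟨0, rfl⟩
    | succ n ih => rw [pow_succ']; exact hX _ ih
  have hf : f ∈ Submodule.span ℝ (Set.range P) := by
    rw [f.as_sum_range_C_mul_X_pow]
    refine Submodule.sum_mem _ fun i _ => ?_
    rw [← smul_eq_C_mul]
    exact Submodule.smul_mem _ _ (hpow i)
  obtain ⟨u, hu⟩ := (Finsupp.mem_span_range_iff_exists_finsupp).1 hf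
  refine ⟨u, u.support.sup id, ?_⟩
  rw [← hu, Finsupp.sum]
  refine Finset.sum_subset ?_ ?_
  · intro i hi
    have : i ≤ u.support.sup id := Finset.le_sup (f := id) hi
    simp; omega
  · intro i _ hi
    simp [Finsupp.notMem_support_iff.1 hi]

lemma L_mul_sum (horth : ∀ m n, m ≠ n → L (P m * P n) = 0) (u : ℕ → ℝ) (m N : ℕ) :
    L (P m * ∑ k ∈ Finset.range N, u k • P k) = if m < N then u m * L (P m * P m) else 0 := by
  rw [Finset.mul_sum, map_sum]
  simp only [mul_smul_comm, map_smul, smul_eq_mul]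
  split_ifs with h
  · rw [Finset.sum_eq_single m]
    · intro k _ hk
      rw [horth m k (Ne.symm hk), mul_zero]
    · intro hm
      simp at hm; omega
  · refine Finset.sum_eq_zero fun k hk => ?_
    simp at hk
    rw [horth m k (by omega), mul_zero]

lemma L_pos (ha : ∀ n, 0 < a n) (hc0 : c 0 = 0) (hc : ∀ n, 0 < c (n + 1))
    (hβ : ∀ n, b n + β = a n + c n)
    (hrec : ∀ n, X * P n = a n • P (n + 1) + b n • P n + c n • P (n - 1))
    (horth : ∀ m n, m ≠ n → L (P m * P n) = 0) (hP0 : P 0 = 1) (hL : L 1 = 1) (f : ℝ[X]) :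
    0 ≤ L ((X + C β) * (f * f)) := by
  obtain ⟨u, N, rfl⟩ := exists_expand hrec hP0 f
  have hxrec : ∀ n, (X + C β) * P n = a n • P (n + 1) + (a n + c n) • P n + c n • P (n - 1) := by
    intro n
    rw [add_mul, hrec n, ← smul_eq_C_mul, ← hβ n]
    module
  have hpos := norm_pos ha hc hrec horth hP0 hL
  suffices h : a N * L (P N * P N) * u N ^ 2 ≤ L ((X + C β) *
      ((∑ k ∈ Finset.range (N + 1), u k • P k) * (∑ k ∈ Finset.range (N + 1), u k • P k))) by
    refine le_trans ?_ h
    have := hpos N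
    have := ha N
    positivity
  induction N with
  | zero =>
    have h1 : (X + C β) * ((∑ k ∈ Finset.range (0 + 1), u k • P k) *
        (∑ k ∈ Finset.range (0 + 1), u k • P k)) = (u 0 ^ 2) • (((X + C β) * P 0) * P 0) := by
      simp only [zero_add, Finset.sum_range_one, smul_eq_C_mul, C_pow]
      ring
    rw [h1, hxrec 0]
    simp [add_mul, horth 1 0 (by omega), hc0]
    apply le_of_eq; ring
  | succ N ih =>
    rw [Finset.sum_range_succ]
    set S := ∑ k ∈ Finset.range (N + 1), u k • P k with hS
    have h1 : (X + C β) * ((S + u (N + 1) • P (N + 1)) * (S + u (N + 1) • P (N + 1)))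
        = (X + C β) * (S * S) + (2 * u (N + 1)) • (((X + C β) * P (N + 1)) * S)
          + (u (N + 1) ^ 2) • (((X + C β) * P (N + 1)) * P (N + 1)) := by
      simp only [smul_eq_C_mul, C_pow, C_mul]
      have : (C 2 : ℝ[X]) = 2 := rfl
      rw [this]
      ring
    have h2 : L (((X + C β) * P (N + 1)) * S) = c (N + 1) * (u N * L (P N * P N)) := by
      rw [hxrec]
      simp only [add_mul, smul_mul_assoc, map_add, map_smul, smul_eq_mul, hS, L_mul_sum horth]
      simp
    have h3 : L (((X + C β) * P (N + 1)) * P (N + 1)) =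
        (a (N + 1) + c (N + 1)) * L (P (N + 1) * P (N + 1)) := by
      rw [hxrec]
      simp only [add_mul, smul_mul_assoc, map_add, map_smul, smul_eq_mul]
      rw [horth (N + 1 + 1) (N + 1) (by omega), horth (N + 1 - 1) (N + 1) (by omega)]
      ring
    rw [h1, map_add, map_add, map_smul, map_smul, h2, h3]
    simp only [smul_eq_mul]
    have h4 := norm_rec hrec horth N
    have hp0 := hpos N
    have hp1 := hpos (N + 1)
    have haN := ha N
    have hcN := hc N
    generalize L (P N * P N) = h at *
    generalize L (P (N + 1) * P (N + 1)) = h' at *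
    have key : 0 ≤ a N * h * u N ^ 2 + 2 * u (N + 1) * (c (N + 1) * (u N * h))
        + u (N + 1) ^ 2 * (c (N + 1) * h') := by
      have e : a N * (a N * h * u N ^ 2 + 2 * u (N + 1) * (c (N + 1) * (u N * h))
        + u (N + 1) ^ 2 * (c (N + 1) * h')) = h * (a N * u N + c (N + 1) * u (N + 1)) ^ 2 := by
        linear_combination (u (N + 1) ^ 2 * c (N + 1)) * h4
      have : 0 ≤ a N * (a N * h * u N ^ 2 + 2 * u (N + 1) * (c (N + 1) * (u N * h))
        + u (N + 1) ^ 2 * (c (N + 1) * h')) := by rw [e]; positivity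
      exact nonneg_of_mul_nonneg_right this haN
    linarith

/-- growth: the sum of `p_k(w)^2 / h_k` diverges. -/
lemma growth {Q h : ℕ → ℝ} {s A : ℝ} (hs : 0 < s) (hA : 0 < A)
    (ha : ∀ n, 0 < a n) (hc0 : c 0 = 0) (hc : ∀ n, 0 < c (n + 1))
    (haA : ∀ n : ℕ, a n ≤ A * ((n : ℝ) + 1) ^ 2) (hcA : ∀ n : ℕ, c (n + 1) ≤ A * ((n : ℝ) + 1) ^ 2)
    (hh0 : h 0 = 1) (hh : ∀ n, 0 < h n) (hhr : ∀ n, a n * h (n + 1) = c (n + 1) * h n)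
    (hQ0 : Q 0 = 1)
    (hQ : ∀ n, a n * (Q (n + 1) - Q n) = c n * (Q n - Q (n - 1)) + s * Q n) (M : ℝ) :
    ∃ N, M < ∑ k ∈ Finset.range N, Q k ^ 2 / h k := by
  by_contra! hcon
  -- D_n = a_n (Q_{n+1} - Q_n) / h_n ≥ s, Q_n ≥ 1
  have hD : ∀ n, 1 ≤ Q n ∧ s ≤ a n * (Q (n + 1) - Q n) / h n := by
    intro n
    induction n with
    | zero =>
      have := hQ 0
      simp [hc0, hQ0] at this
      simp [hQ0, hh0, this]
    | succ n ih =>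
      obtain ⟨h1, h2⟩ := ih
      have hinc : 0 < Q (n + 1) - Q n := by
        have h3 : 0 < a n * (Q (n + 1) - Q n) / h n := lt_of_lt_of_le hs h2
        have h4 : 0 < a n * (Q (n + 1) - Q n) := by
          have := mul_pos h3 (hh n)
          rwa [div_mul_cancel₀ _ (hh n).ne'] at this
        exact (pos_iff_pos_of_mul_pos h4).1 (ha n)
      have hQ1 : 1 ≤ Q (n + 1) := by linarith
      refine ⟨hQ1, ?_⟩
      have h5 := hQ (n + 1)
      simp only [Nat.add_sub_cancel] at h5
      rw [h5]
      have h6 : c (n + 1) * (Q (n + 1) - Q n) / h (n + 1) = a n * (Q (n + 1) - Q n) / h n := by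
        rw [div_eq_div_iff (hh _).ne' (hh _).ne']
        linear_combination -(Q (n + 1) - Q n) * hhr n
      rw [add_div, h6]
      have : 0 < s * Q (n + 1) / h (n + 1) := by
        have := hh (n + 1)
        positivity
      linarith
  obtain ⟨κ, hκ, hκ4⟩ : ∃ κ : ℝ, 0 < κ ∧ κ ^ 4 * A ^ 2 ≤ 64 * s ^ 2 := by
    refine ⟨Real.sqrt (s / A), by positivity, ?_⟩
    have : Real.sqrt (s / A) ^ 4 = (s / A) ^ 2 := by
      rw [show (4 : ℕ) = 2 * 2 by norm_num, pow_mul, Real.sq_sqrt (by positivity)]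
    rw [this, div_pow, div_mul_cancel₀ _ (by positivity)]
    nlinarith [sq_nonneg s]
  have hterm : ∀ n : ℕ, κ * (1 / ((n : ℝ) + 1)) ≤
      (Q n ^ 2 / h n + Q (n + 1) ^ 2 / h (n + 1)) + (1 / Q n - 1 / Q (n + 1)) := by
    intro n
    have hq := (hD n).1
    have hq' := (hD (n + 1)).1
    have hd := (hD n).2
    have hp := hh n
    have hp' := hh (n + 1)
    have hr := hhr n
    have hA1 := haA n
    have hA2 := hcA n
    have hapos := ha n
    have hcpos := hc n
    set m : ℝ := (n : ℝ) + 1 with hm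
    have hmpos : 0 < m := by positivity
    rw [le_div_iff₀ hp] at hd
    generalize Q n = x at *
    generalize Q (n + 1) = y at *
    generalize h n = p at *
    generalize h (n + 1) = p' at *
    generalize a n = a0 at *
    generalize c (n + 1) = c0 at *
    have hx : 0 < x := by linarith
    have hy : 0 < y := by linarith
    have hyx : 0 < y - x := by
      have : 0 < a0 * (y - x) := lt_of_lt_of_le (by positivity) hd
      exact (pos_iff_pos_of_mul_pos this).1 hapos
    set e := x ^ 2 / p + y ^ 2 / p' with he
    set r := 1 / x - 1 / y with hr'
    have hr0 : r = (y - x) / (x * y) := by rw [hr']; field_simp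
    have hrpos : 0 < r := by rw [hr0]; positivity
    have hepos : 0 < e := by positivity
    have h1 : 4 * (x ^ 2 / p) * (y ^ 2 / p') ≤ e ^ 2 := by
      rw [he]; nlinarith [sq_nonneg (x ^ 2 / p - y ^ 2 / p')]
    have h2 : 4 * (y - x) ^ 2 / (p * p') ≤ e ^ 2 * r ^ 2 := by
      calc 4 * (y - x) ^ 2 / (p * p') = (4 * (x ^ 2 / p) * (y ^ 2 / p')) * r ^ 2 := by
            rw [hr0]; field_simp
        _ ≤ _ := by gcongr
    have h3 : 4 * s ^ 2 / (A * m ^ 2) ^ 2 ≤ 4 * (y - x) ^ 2 / (p * p') := by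
      rw [div_le_div_iff₀ (by positivity) (by positivity)]
      have h31 : (s * p) ^ 2 ≤ (a0 * (y - x)) ^ 2 := by gcongr
      have h32 : a0 * c0 ≤ (A * m ^ 2) ^ 2 := by
        rw [sq]; gcongr
      have h33 : s ^ 2 * (p * p') ≤ (y - x) ^ 2 * (a0 * c0) := by
        have : a0 * (s ^ 2 * (p * p')) ≤ a0 * ((y - x) ^ 2 * (a0 * c0)) := by
          calc a0 * (s ^ 2 * (p * p')) = s ^ 2 * p * (a0 * p') := by ring
            _ = c0 * (s * p) ^ 2 := by rw [hr]; ring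
            _ ≤ c0 * (a0 * (y - x)) ^ 2 := by gcongr
            _ = _ := by ring
        exact le_of_mul_le_mul_left this hapos
      have h34 : (y - x) ^ 2 * (a0 * c0) ≤ (y - x) ^ 2 * (A * m ^ 2) ^ 2 := by gcongr
      linarith
    have h4 : 16 * (e ^ 2 * r ^ 2) ≤ (e + r) ^ 4 := by
      have h41 : 4 * (e * r) ≤ (e + r) ^ 2 := by nlinarith [sq_nonneg (e - r)]
      calc 16 * (e ^ 2 * r ^ 2) = (4 * (e * r)) ^ 2 := by ring
        _ ≤ ((e + r) ^ 2) ^ 2 := by gcongr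
        _ = _ := by ring
    have h5 : (κ * (1 / m)) ^ 4 ≤ 16 * (4 * s ^ 2 / (A * m ^ 2) ^ 2) := by
      have : (κ * (1 / m)) ^ 4 = κ ^ 4 * A ^ 2 / (A * m ^ 2) ^ 2 := by field_simp
      rw [this, ← mul_div_assoc]
      exact div_le_div_of_nonneg_right (by linarith) (by positivity)
    exact le_of_pow_le_pow_left₀ (n := 4) (by norm_num) (by positivity : 0 ≤ e + r) (by linarith)
  have hQpos : ∀ n, 0 < Q n := fun n => by linarith [(hD n).1]
  have hbound : ∀ N : ℕ, κ * ∑ n ∈ Finset.range N, 1 / ((n : ℝ) + 1) ≤ 2 * M + 1 := by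
    intro N
    rw [Finset.mul_sum]
    refine (Finset.sum_le_sum fun n _ => hterm n).trans ?_
    rw [Finset.sum_add_distrib, Finset.sum_add_distrib]
    have t1 := hcon N
    have t2 : ∑ n ∈ Finset.range N, Q (n + 1) ^ 2 / h (n + 1) ≤ M := by
      have := hcon (N + 1)
      rw [Finset.sum_range_succ'] at this
      have : 0 < Q 0 ^ 2 / h 0 := div_pos (pow_pos (hQpos 0) 2) (hh 0)
      linarith
    have t3 : ∑ n ∈ Finset.range N, (1 / Q n - 1 / Q (n + 1)) ≤ 1 := by
      rw [Finset.sum_range_sub' (fun n => 1 / Q n), hQ0]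
      have : 0 < 1 / Q N := one_div_pos.2 (hQpos N)
      linarith
    linarith
  have hdiv := Real.tendsto_sum_range_one_div_nat_succ_atTop
  obtain ⟨N, hN⟩ := (hdiv.eventually_gt_atTop ((2 * M + 1) / κ)).exists
  rw [div_lt_iff₀ hκ] at hN
  have := hbound N
  linarith

lemma christoffel {A w : ℝ} (hA : 0 < A) (hw : w < -β)
    (ha : ∀ n, 0 < a n) (hc0 : c 0 = 0) (hc : ∀ n, 0 < c (n + 1))
    (haA : ∀ n : ℕ, a n ≤ A * ((n : ℝ) + 1) ^ 2) (hcA : ∀ n : ℕ, c (n + 1) ≤ A * ((n : ℝ) + 1) ^ 2)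
    (hβ : ∀ n, b n + β = a n + c n)
    (hrec : ∀ n, X * P n = a n • P (n + 1) + b n • P n + c n • P (n - 1))
    (horth : ∀ m n, m ≠ n → L (P m * P n) = 0) (hP0 : P 0 = 1) (hL : L 1 = 1)
    {ε : ℝ} (hε : 0 < ε) :
    ∃ f : ℝ[X], f.eval w = 1 ∧ L (f * f) < ε := by
  have hpos := norm_pos ha hc hrec horth hP0 hL
  set h : ℕ → ℝ := fun n => L (P n * P n) with hh
  obtain ⟨N, hN⟩ := growth (a := a) (c := c) (Q := fun n => (-1) ^ n * (P n).eval w) (h := h)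
    (s := -β - w) (A := A) (by linarith) hA ha hc0 hc haA hcA (by simp [hh, hP0, hL]) hpos
    (norm_rec hrec horth) (by simp [hP0]) (by
      intro n
      have h1 := congrArg (Polynomial.eval w) (hrec n)
      simp only [eval_mul, eval_X, eval_add, eval_smul, smul_eq_mul] at h1
      have h2 := hβ n
      rcases n with _ | n
      · simp only [hc0] at *
        simp only [pow_zero, zero_add, pow_one]
        linear_combination h1 + (P 0).eval w * h2
      · simp only [Nat.add_sub_cancel] at *
        simp only [pow_succ]
        linear_combination (-1) ^ n * (-1) * h1 + (-1) ^ n * (-1) * (P (n + 1)).eval w * h2) ε⁻¹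
  have hQ : ∀ k, ((-1) ^ k * (P k).eval w) ^ 2 / h k = (P k).eval w ^ 2 / h k := by
    intro k
    rw [mul_pow, ← pow_mul, mul_comm k 2, pow_mul]; simp
  simp only [hQ] at hN
  set S := ∑ k ∈ Finset.range N, (P k).eval w ^ 2 / h k with hS
  have hSpos : 0 < S := lt_trans (by positivity) hN
  set K : ℝ[X] := ∑ k ∈ Finset.range N, ((P k).eval w / h k) • P k with hK
  have hKw : K.eval w = S := by
    rw [hK, hS, eval_finsetSum]
    refine Finset.sum_congr rfl fun k _ => ?_
    rw [eval_smul, smul_eq_mul]; ring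
  have hKK : L (K * K) = S := by
    have : K * K = ∑ k ∈ Finset.range N, ((P k).eval w / h k) • (P k * K) := by
      conv_lhs => lhs; rw [hK]
      rw [Finset.sum_mul]
      simp only [smul_mul_assoc]
    rw [this, map_sum, hS]
    refine Finset.sum_congr rfl fun k hk => ?_
    rw [map_smul, hK, L_mul_sum horth, if_pos (Finset.mem_range.1 hk), smul_eq_mul]
    change _ * (_ * h k) = _
    have := (hpos k).ne'
    field_simp
  refine ⟨S⁻¹ • K, ?_, ?_⟩
  · rw [eval_smul, hKw, smul_eq_mul, inv_mul_cancel₀ hSpos.ne']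
  · rw [smul_mul_smul_comm, map_smul, hKK, smul_eq_mul, mul_assoc, inv_mul_cancel₀ hSpos.ne', mul_one]
    exact inv_lt_of_inv_lt₀ hε hN

end AlgPart

section MeasPart

open Filter Topology ENNReal

variable {μ : Measure ℝ}

lemma asm_poly (f : ℝ[X]) : AEStronglyMeasurable (fun y => f.eval y) μ :=
  f.continuous.aestronglyMeasurable

/-- `h` is an `L²` limit of polynomials. -/
def PolyApprox (μ : Measure ℝ) (h : ℝ → ℝ) : Prop :=
  AEStronglyMeasurable h μ ∧ ∀ ε : ℝ≥0∞, ε ≠ 0 →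
    ∃ g : ℝ[X], eLpNorm (fun y => h y - g.eval y) 2 μ ≤ ε

lemma point_null {w : ℝ}
    (hdense : ∀ ε : ℝ≥0∞, ε ≠ 0 →
      ∃ g : ℝ[X], eLpNorm (fun y => 1 - (y - w) * g.eval y) 2 μ ≤ ε) :
    ∀ᵐ y ∂μ, y ≠ w := by
  have h0 : μ {w} = 0 := by
    by_contra hne
    have hpos : (μ {w}) ^ (1 / (2 : ℝ)) ≠ 0 := by
      simp [hne]
    obtain ⟨ε, hε0, hε⟩ := exists_between (pos_iff_ne_zero.2 hpos)
    obtain ⟨g, hg⟩ := hdense ε hε0.ne'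
    have hm : AEStronglyMeasurable (fun y => 1 - (y - w) * g.eval y) μ :=
      Continuous.aestronglyMeasurable (by fun_prop)
    have := pow_mul_meas_ge_le_eLpNorm μ (p := 2) (by norm_num) (by norm_num) hm 1
    have h2 : (μ {w}) ^ (1 / (2 : ℝ)) ≤ eLpNorm (fun y => 1 - (y - w) * g.eval y) 2 μ := by
      refine le_trans ?_ this
      rw [one_mul]
      simp only [ENNReal.toReal_ofNat]
      gcongr
      intro y hy
      rw [Set.mem_singleton_iff.1 hy]
      simp
    exact absurd (h2.trans hg) (not_le.2 hε)
  rw [ae_iff]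
  simpa using h0

lemma step_dense {w : ℝ} {h : ℝ → ℝ}
    (hdense : ∀ ε : ℝ≥0∞, ε ≠ 0 →
      ∃ g : ℝ[X], eLpNorm (fun y => 1 - (y - w) * g.eval y) 2 μ ≤ ε)
    (hh : PolyApprox μ h) (ε : ℝ≥0∞) (hε : ε ≠ 0) :
    ∃ g : ℝ[X], eLpNorm (fun y => h y - (y - w) * g.eval y) 2 μ ≤ ε := by
  have hε2 : ε / 2 ≠ 0 := by simp [hε]
  obtain ⟨f, hf⟩ := hh.2 (ε / 2) hε2
  obtain ⟨g1, hg1⟩ := hdense (ε / 2 / (‖f.eval w‖ₑ + 1)) (by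
    rw [Ne, ENNReal.div_eq_zero_iff]; simp [hε])
  obtain ⟨f', hf'⟩ : ∃ f' : ℝ[X], f = (X - C w) * f' + C (f.eval w) := by
    obtain ⟨f', hf'⟩ := X_sub_C_dvd_sub_C_eval (p := f) (a := w)
    exact ⟨f', by rw [← hf']; ring⟩
  refine ⟨f' + C (f.eval w) * g1, ?_⟩
  have e : (fun y => h y - (y - w) * (f' + C (f.eval w) * g1).eval y) =
      (fun y => h y - f.eval y) + (f.eval w) • (fun y => 1 - (y - w) * g1.eval y) := by
    funext y
    have := congrArg (Polynomial.eval y) hf'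
    simp only [eval_add, eval_mul, eval_sub, eval_X, eval_C] at this
    simp only [Pi.add_apply, Pi.smul_apply, smul_eq_mul, eval_add, eval_mul, eval_C]
    linear_combination this
  rw [e]
  have hm : AEStronglyMeasurable (fun y => 1 - (y - w) * g1.eval y) μ :=
    Continuous.aestronglyMeasurable (by fun_prop)
  refine (eLpNorm_add_le (hh.1.sub (asm_poly f)) (hm.const_smul _) (by norm_num)).trans ?_
  rw [eLpNorm_const_smul]
  calc _ ≤ ε / 2 + (‖f.eval w‖ₑ + 1) * (ε / 2 / (‖f.eval w‖ₑ + 1)) := by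
        gcongr
        exacts [hf, le_self_add]
    _ ≤ ε / 2 + ε / 2 := by gcongr; exact ENNReal.mul_div_le
    _ = ε := ENNReal.add_halves ε

lemma step {w : ℝ} {K : ℝ≥0∞} (hK0 : K ≠ 0) (hK : K ≠ ∞) {h : ℝ → ℝ}
    (hdense : ∀ ε : ℝ≥0∞, ε ≠ 0 →
      ∃ g : ℝ[X], eLpNorm (fun y => 1 - (y - w) * g.eval y) 2 μ ≤ ε)
    (hbd : ∀ g : ℝ[X], eLpNorm (fun y => g.eval y) 2 μ ≤
      K * eLpNorm (fun y => (y - w) * g.eval y) 2 μ)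
    (hh : PolyApprox μ h) :
    PolyApprox μ (fun y => h y * (y - w)⁻¹) ∧
      eLpNorm (fun y => h y * (y - w)⁻¹) 2 μ ≤ K * eLpNorm h 2 μ := by
  have hd := step_dense hdense hh
  -- key: a polynomial approximating `h` after multiplication
  have hm : AEStronglyMeasurable (fun y => h y * (y - w)⁻¹) μ :=
    hh.1.mul (Measurable.aestronglyMeasurable (by fun_prop))
  have hmg : ∀ g : ℝ[X], AEStronglyMeasurable (fun y => (y - w) * g.eval y) μ := fun g =>
    Continuous.aestronglyMeasurable (by fun_prop)
  choose G hG using fun n : ℕ => hd ((n : ℝ≥0∞) + 1)⁻¹ (by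
    simp [ENNReal.inv_eq_zero, ENNReal.add_eq_top])
  have hlim0 : Tendsto (fun n : ℕ => ((n : ℝ≥0∞) + 1)⁻¹) atTop (𝓝 0) := by
    have := (tendsto_add_atTop_iff_nat 1).2 ENNReal.tendsto_inv_nat_nhds_zero
    simpa using this
  have hsw : ∀ g : ℝ[X], eLpNorm (fun y => (y - w) * g.eval y - h y) 2 μ
      = eLpNorm (fun y => h y - (y - w) * g.eval y) 2 μ := fun g =>
    eLpNorm_sub_comm (fun y => (y - w) * g.eval y) h 2 μ
  have hconv : Tendsto (fun n => eLpNorm ((fun y => (y - w) * (G n).eval y) - h) 2 μ) atTop (𝓝 0) := by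
    refine tendsto_of_tendsto_of_tendsto_of_le_of_le tendsto_const_nhds hlim0 (fun _ => zero_le)
      (fun n => ?_)
    exact (hsw (G n)).trans_le (hG n)
  obtain ⟨ns, hns, hae⟩ := (tendstoInMeasure_of_tendsto_eLpNorm (by norm_num)
    (fun n => hmg (G n)) hh.1 hconv).exists_seq_tendsto_ae
  have hae' : ∀ᵐ y ∂μ, Tendsto (fun i => (G (ns i)).eval y) atTop (𝓝 (h y * (y - w)⁻¹)) := by
    filter_upwards [hae, point_null hdense] with y hy hyw
    have := hy.mul_const (y - w)⁻¹
    refine this.congr fun i => ?_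
    have : y - w ≠ 0 := sub_ne_zero.2 hyw
    field_simp
  have hevent : ∀ δ : ℝ≥0∞, δ ≠ 0 → ∀ᶠ i in atTop,
      eLpNorm (fun y => h y - (y - w) * (G (ns i)).eval y) 2 μ ≤ δ := by
    intro δ hδ
    have := (hlim0.comp hns.tendsto_atTop).eventually (Iic_mem_nhds (pos_iff_ne_zero.2 hδ))
    filter_upwards [this] with i hi
    exact (hG _).trans hi
  -- the estimate
  have main : ∀ (g : ℝ[X]) (δ : ℝ≥0∞), δ ≠ 0 →
      eLpNorm (fun y => h y * (y - w)⁻¹ - g.eval y) 2 μ ≤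
        K * (eLpNorm (fun y => h y - (y - w) * g.eval y) 2 μ + δ) := by
    intro g δ hδ
    refine Lp.eLpNorm_le_of_ae_tendsto (u := atTop)
      (f := fun i y => (G (ns i)).eval y - g.eval y) ?_ ?_ ?_
    · filter_upwards [hevent δ hδ] with i hi
      have := hbd (G (ns i) - g)
      simp only [eval_sub] at this
      refine this.trans ?_
      gcongr
      have e : (fun y => (y - w) * ((G (ns i)).eval y - g.eval y)) =
          (fun y => h y - (y - w) * g.eval y) - (fun y => h y - (y - w) * (G (ns i)).eval y) := by
        funext y; simp only [Pi.sub_apply]; ring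
      rw [e]
      refine (eLpNorm_sub_le (hh.1.sub (hmg g)) (hh.1.sub (hmg _)) (by norm_num)).trans ?_
      exact add_le_add le_rfl hi
    · intro i
      exact (asm_poly _).sub (asm_poly _)
    · filter_upwards [hae'] with y hy
      exact hy.sub_const _
  refine ⟨⟨hm, ?_⟩, ?_⟩
  · intro ε hε
    have hne : ε / K / 2 ≠ 0 := by
      simp [hε, hK]
    obtain ⟨g, hg⟩ := hd (ε / K / 2) hne
    refine ⟨g, (main g _ hne).trans ?_⟩
    calc _ ≤ K * (ε / K / 2 + ε / K / 2) := by gcongr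
      _ = K * (ε / K) := by rw [ENNReal.add_halves]
      _ ≤ ε := ENNReal.mul_div_le
  · have h1 := fun δ hδ => main 0 δ hδ
    simp only [eval_zero, sub_zero, mul_zero] at h1
    have h2 : Tendsto (fun n : ℕ => K * (eLpNorm h 2 μ + ((n : ℝ≥0∞) + 1)⁻¹)) atTop
        (𝓝 (K * (eLpNorm h 2 μ + 0))) :=
      ENNReal.Tendsto.const_mul (hlim0.const_add _) (Or.inr hK)
    rw [add_zero] at h2
    refine ge_of_tendsto' h2 fun n => h1 _ ?_
    simp [ENNReal.inv_eq_zero, ENNReal.add_eq_top]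

lemma ball_null [IsProbabilityMeasure μ] {w s : ℝ} (hs : 0 < s)
    (hdense : ∀ ε : ℝ≥0∞, ε ≠ 0 →
      ∃ g : ℝ[X], eLpNorm (fun y => 1 - (y - w) * g.eval y) 2 μ ≤ ε)
    (hbd : ∀ g : ℝ[X], eLpNorm (fun y => g.eval y) 2 μ ≤
      ENNReal.ofReal s⁻¹ * eLpNorm (fun y => (y - w) * g.eval y) 2 μ) :
    ∀ᵐ y ∂μ, s ≤ |y - w| := by
  have hiter : ∀ k : ℕ, PolyApprox μ (fun y => ((y - w)⁻¹) ^ k) ∧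
      eLpNorm (fun y => ((y - w)⁻¹) ^ k) 2 μ ≤ ENNReal.ofReal s⁻¹ ^ k := by
    intro k
    induction k with
    | zero =>
      refine ⟨⟨?_, fun ε _ => ⟨1, ?_⟩⟩, ?_⟩
      · simpa using aestronglyMeasurable_const
      · simp
      · simp only [pow_zero]
        rw [eLpNorm_const _ (by norm_num) (IsProbabilityMeasure.ne_zero μ)]
        simp
    | succ k ih =>
      obtain ⟨h1, h2⟩ := step (K := ENNReal.ofReal s⁻¹) (by simpa using hs) (by simp)
        hdense hbd ih.1
      simp only [pow_succ]
      refine ⟨h1, h2.trans ?_⟩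
      rw [mul_comm]
      gcongr
      exact ih.2
  have hr : ∀ r : ℝ, 0 < r → r < s → μ {y | y ≠ w ∧ |y - w| ≤ r} = 0 := by
    intro r hr hrs
    have hk : ∀ k : ℕ, μ {y | y ≠ w ∧ |y - w| ≤ r} ≤ ENNReal.ofReal (((r / s) ^ 2) ^ k) := by
      intro k
      have hmk := meas_ge_le_mul_pow_eLpNorm_enorm μ (p := 2) (by norm_num) (by norm_num)
        (hiter k).1.1 (ε := ENNReal.ofReal (r⁻¹ ^ k)) (by
          rw [Ne, ENNReal.ofReal_eq_zero, not_le]; positivity) (by simp)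
      have hsub : {y | y ≠ w ∧ |y - w| ≤ r} ⊆
          {y | ENNReal.ofReal (r⁻¹ ^ k) ≤ ‖((y - w)⁻¹) ^ k‖ₑ} := by
        rintro y ⟨hy, hyr⟩
        have hpos : 0 < |y - w| := abs_pos.2 (sub_ne_zero.2 hy)
        simp only [Set.mem_ofPred_eq]
        rw [Real.enorm_eq_ofReal_abs, abs_pow, abs_inv]
        gcongr
      refine (measure_mono hsub).trans (hmk.trans ?_)
      simp only [ENNReal.toReal_ofNat, ENNReal.rpow_ofNat]
      calc _ ≤ (ENNReal.ofReal (r⁻¹ ^ k))⁻¹ ^ 2 * (ENNReal.ofReal s⁻¹ ^ k) ^ 2 := by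
            gcongr; exact (hiter k).2
        _ = _ := by
          rw [← ENNReal.ofReal_inv_of_pos (by positivity), ← ENNReal.ofReal_pow (by positivity),
            ← ENNReal.ofReal_pow (by positivity), ← ENNReal.ofReal_pow (by positivity),
            ← ENNReal.ofReal_mul (by positivity)]
          congr 1
          rw [show (r / s) ^ 2 = (r⁻¹ ^ 2)⁻¹ * s⁻¹ ^ 2 by field_simp, mul_pow, inv_pow, ← pow_mul,
            ← pow_mul, ← pow_mul, mul_comm 2 k, inv_pow (r⁻¹ ^ 2) k, ← pow_mul, mul_comm 2 k]
    have hlim : Tendsto (fun k : ℕ => ENNReal.ofReal (((r / s) ^ 2) ^ k)) atTop (𝓝 0) := by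
      rw [← ENNReal.ofReal_zero]
      refine (ENNReal.continuous_ofReal.tendsto 0).comp ?_
      refine tendsto_pow_atTop_nhds_zero_of_lt_one (by positivity) ?_
      have : r / s < 1 := (div_lt_one hs).2 hrs
      have : 0 < r / s := by positivity
      nlinarith
    exact le_antisymm (ge_of_tendsto' hlim hk) zero_le
  have hall : ∀ᵐ y ∂μ, ∀ n : ℕ, ¬ (y ≠ w ∧ |y - w| ≤ s * (1 - 1 / ((n : ℝ) + 2))) := by
    rw [ae_all_iff]
    intro n
    rw [ae_iff]
    simp only [not_not]
    have hn : (0 : ℝ) < (n : ℝ) + 2 := by positivity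
    have h1 : 1 / ((n : ℝ) + 2) < 1 := by
      rw [div_lt_one hn]
      have : (0 : ℝ) ≤ n := Nat.cast_nonneg n
      linarith
    have h2 : 0 < 1 / ((n : ℝ) + 2) := by positivity
    exact hr _ (mul_pos hs (by linarith)) (by nlinarith)
  filter_upwards [hall, point_null hdense] with y hy hyw
  by_contra! hlt
  obtain ⟨n, hn⟩ := exists_nat_one_div_lt (show 0 < 1 - |y - w| / s by
    rw [sub_pos, div_lt_one hs]; exact hlt)
  refine hy n ⟨hyw, ?_⟩
  have h3 : 1 / ((n : ℝ) + 2) ≤ 1 / ((n : ℝ) + 1) := by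
    gcongr; norm_num
  have h4 : |y - w| / s ≤ 1 - 1 / ((n : ℝ) + 2) := by linarith
  rw [div_le_iff₀ hs] at h4
  linarith

lemma integrable_poly (hmom : ∀ n : ℕ, Integrable (fun y : ℝ => |y| ^ n) μ) (f : ℝ[X]) :
    Integrable (fun y => f.eval y) μ := by
  simp only [eval_eq_sum_range]
  refine integrable_finsetSum _ fun i _ => Integrable.const_mul ?_ _
  refine (integrable_norm_iff (Continuous.aestronglyMeasurable (by fun_prop))).1 ?_
  simpa using hmom i

/-- integration of polynomials as a linear functional -/
noncomputable def intL (μ : Measure ℝ) (hmom : ∀ n : ℕ, Integrable (fun y : ℝ => |y| ^ n) μ) :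
    ℝ[X] →ₗ[ℝ] ℝ where
  toFun f := ∫ y, f.eval y ∂μ
  map_add' f g := by
    simp only [eval_add]
    exact integral_add (integrable_poly hmom f) (integrable_poly hmom g)
  map_smul' r f := by
    simp only [eval_smul, smul_eq_mul, RingHom.id_apply]
    exact integral_const_mul _ _

lemma eLpNorm_poly (hmom : ∀ n : ℕ, Integrable (fun y : ℝ => |y| ^ n) μ) (f : ℝ[X]) :
    eLpNorm (fun y => f.eval y) 2 μ = ENNReal.ofReal (Real.sqrt (intL μ hmom (f * f))) := by
  have hml : MemLp (fun y => f.eval y) 2 μ := by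
    rw [memLp_two_iff_integrable_sq (asm_poly f)]
    have := integrable_poly hmom (f ^ 2)
    simpa using this
  rw [hml.eLpNorm_eq_integral_rpow_norm (by norm_num) (by norm_num)]
  congr 1
  rw [Real.sqrt_eq_rpow]
  simp only [ENNReal.toReal_ofNat, intL, LinearMap.coe_mk, AddHom.coe_mk, eval_mul]
  congr 1
  · refine integral_congr_ae (ae_of_all _ fun y => ?_)
    simp [← sq]
  · norm_num

end MeasPart



/-- for `0 ≤ q ≤ 1`, `η > 0`, `θ ≥ 0`, `τ ≥ 0`, `t > 0`, any orthogonality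
measure `μ_t` of the polynomials `{p_n(·;t)}` (a probability measure with finite moments)
is supported in `[-1/η, ∞)`, i.e. `μ_t((-∞, -1/η)) = 0`. -/
theorem stmt13 (η θ τ q t : ℝ)
    (hq0 : 0 ≤ q) (hq1 : q ≤ 1) (hη : 0 < η) (hθ : 0 ≤ θ) (hτ : 0 ≤ τ) (ht : 0 < t)
    (p : ℕ → ℝ → ℝ)
    (hp0 : ∀ y : ℝ, p 0 y = 1)
    (hprec : ∀ (n : ℕ) (y : ℝ), y * p n y =
      aCoef η θ τ q n * p (n + 1) y + bCoef η θ τ q t n * p n y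
        + cCoef η τ q t n * p (n - 1) y)
    (μ : Measure ℝ)
    (hprob : IsProbabilityMeasure μ)
    (hmom : ∀ n : ℕ, Integrable (fun y : ℝ => |y| ^ n) μ)
    (horth : ∀ m n : ℕ, m ≠ n → ∫ y, p m y * p n y ∂μ = 0) :
    μ (Set.Iio (-(1 / η))) = 0 := by
  have hq_nn : ∀ n, 0 ≤ qnum q n := fun n => Finset.sum_nonneg fun i _ => pow_nonneg hq0 i
  have hq_pos : ∀ n, 0 < qnum q (n + 1) := by
    intro n
    unfold qnum
    rw [Finset.sum_range_succ']
    have : 0 ≤ ∑ i ∈ Finset.range n, q ^ (i + 1) :=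
      Finset.sum_nonneg fun i _ => pow_nonneg hq0 _
    simp only [pow_zero]
    linarith
  have hq_le : ∀ n : ℕ, qnum q n ≤ n := by
    intro n
    unfold qnum
    calc _ ≤ ∑ i ∈ Finset.range n, (1 : ℝ) := Finset.sum_le_sum fun i _ => pow_le_one₀ hq0 hq1
      _ = n := by simp
  have ha : ∀ n, 0 < aCoef η θ τ q n := by
    intro n
    have := hq_nn n
    unfold aCoef
    positivity
  have hc0 : cCoef η τ q t 0 = 0 := by simp [cCoef, qnum]
  have hc : ∀ n, 0 < cCoef η τ q t (n + 1) := by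
    intro n
    have := hq_pos n
    have := hq_nn (n + 1 - 1)
    unfold cCoef
    positivity
  have hβ : ∀ n, bCoef η θ τ q t n + η⁻¹ = aCoef η θ τ q n + cCoef η τ q t n := by
    intro n
    unfold aCoef bCoef cCoef
    ring
  set A : ℝ := η⁻¹ + θ + η * τ + η * (t + τ) with hA
  have hApos : 0 < A := by positivity
  have haA : ∀ n : ℕ, aCoef η θ τ q n ≤ A * ((n : ℝ) + 1) ^ 2 := by
    intro n
    have h1 := hq_nn n
    have h2 := hq_le n
    have hn : (0 : ℝ) ≤ n := Nat.cast_nonneg n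
    have h3 : (1 : ℝ) ≤ ((n : ℝ) + 1) ^ 2 := by nlinarith
    have h4 : qnum q n ≤ ((n : ℝ) + 1) ^ 2 := by nlinarith
    have h5 : qnum q n ^ 2 ≤ ((n : ℝ) + 1) ^ 2 := by
      gcongr; linarith
    have e1 : η⁻¹ * 1 ≤ η⁻¹ * ((n : ℝ) + 1) ^ 2 := by gcongr
    have e2 : θ * qnum q n ≤ θ * ((n : ℝ) + 1) ^ 2 := by gcongr
    have e3 : (η * τ) * qnum q n ^ 2 ≤ (η * τ) * ((n : ℝ) + 1) ^ 2 := by gcongr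
    have e4 : 0 ≤ η * (t + τ) * ((n : ℝ) + 1) ^ 2 := by positivity
    unfold aCoef
    rw [hA]
    linarith
  have hcA : ∀ n : ℕ, cCoef η τ q t (n + 1) ≤ A * ((n : ℝ) + 1) ^ 2 := by
    intro n
    have h1 := hq_nn n
    have h2 := hq_le n
    have h3 := hq_le (n + 1)
    have h4 := hq_nn (n + 1)
    push_cast at h3
    have hn : (0 : ℝ) ≤ n := Nat.cast_nonneg n
    unfold cCoef
    simp only [Nat.add_sub_cancel]
    have e1 : t + τ * qnum q n ≤ (t + τ) * ((n : ℝ) + 1) := by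
      have : τ * qnum q n ≤ τ * n := by gcongr
      nlinarith [mul_nonneg ht.le hn]
    calc η * (t + τ * qnum q n) * qnum q (n + 1)
        ≤ η * ((t + τ) * ((n : ℝ) + 1)) * ((n : ℝ) + 1) := by gcongr
      _ = (η * (t + τ)) * ((n : ℝ) + 1) ^ 2 := by ring
      _ ≤ A * ((n : ℝ) + 1) ^ 2 := by
        gcongr
        have : 0 ≤ η⁻¹ + θ + η * τ := by positivity
        linarith
  -- polynomials
  have hex : ∀ n, ∃ f g : ℝ[X], (∀ y, p n y = f.eval y) ∧ (∀ y, p (n + 1) y = g.eval y) := by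
    have hstep : ∀ n (f g : ℝ[X]), (∀ y, p n y = f.eval y) → (∀ y, p (n - 1) y = g.eval y) →
        ∃ k : ℝ[X], ∀ y, p (n + 1) y = k.eval y := by
      intro n f g hf hg
      refine ⟨C (aCoef η θ τ q n)⁻¹ * (X * f - C (bCoef η θ τ q t n) * f
        - C (cCoef η τ q t n) * g), fun y => ?_⟩
      have h1 := hprec n y
      have h2 := (ha n).ne'
      simp only [eval_mul, eval_sub, eval_C, eval_X, ← hf, ← hg]
      rw [h1]
      field_simp
      ring
    intro n
    induction n with
    | zero =>
      obtain ⟨k, hk⟩ := hstep 0 1 1 (by simp [hp0]) (by simp [hp0])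
      exact ⟨1, k, by simp [hp0], hk⟩
    | succ n ih =>
      obtain ⟨f, g, hf, hg⟩ := ih
      obtain ⟨k, hk⟩ := hstep (n + 1) g f hg hf
      exact ⟨g, k, hg, hk⟩
  choose P _ hP _ using hex
  have hP0 : P 0 = 1 := Polynomial.funext fun y => by rw [← hP, hp0]; simp
  have hrec : ∀ n, X * P n = aCoef η θ τ q n • P (n + 1) + bCoef η θ τ q t n • P n
      + cCoef η τ q t n • P (n - 1) := by
    intro n
    refine Polynomial.funext fun y => ?_
    simp only [eval_mul, eval_X, eval_add, eval_smul, smul_eq_mul, ← hP]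
    exact hprec n y
  set L := intL μ hmom with hLdef
  have hL1 : L 1 = 1 := by
    simp [hLdef, intL]
  have hLorth : ∀ m n, m ≠ n → L (P m * P n) = 0 := by
    intro m n hmn
    simp only [hLdef, intL, LinearMap.coe_mk, AddHom.coe_mk, eval_mul, ← hP]
    exact horth m n hmn
  have hsq : ∀ f : ℝ[X], 0 ≤ L (f * f) := by
    intro f
    simp only [hLdef, intL, LinearMap.coe_mk, AddHom.coe_mk, eval_mul]
    exact integral_nonneg fun y => mul_self_nonneg _
  have hmain : ∀ s : ℝ, 0 < s → ∀ᵐ y ∂μ, s ≤ |y - (-η⁻¹ - s)| := by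
    intro s hs
    refine ball_null hs ?_ ?_
    · intro ε hε
      obtain ⟨δ, hδ0, hδ⟩ : ∃ δ : ℝ, 0 < δ ∧ ENNReal.ofReal δ ≤ ε := by
        by_cases hε' : ε = ⊤
        · exact ⟨1, one_pos, by simp [hε']⟩
        · exact ⟨ε.toReal, ENNReal.toReal_pos hε hε', by rw [ENNReal.ofReal_toReal hε']⟩
      obtain ⟨f, hf1, hf2⟩ := christoffel (β := η⁻¹) (w := -η⁻¹ - s) hApos (by linarith) ha hc0 hc
        haA hcA hβ hrec hLorth hP0 hL1 (ε := δ ^ 2) (by positivity)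
      obtain ⟨g, hg⟩ := X_sub_C_dvd_sub_C_eval (p := f) (a := -η⁻¹ - s)
      refine ⟨-g, ?_⟩
      have e : (fun y => 1 - (y - (-η⁻¹ - s)) * (-g).eval y) = fun y => f.eval y := by
        funext y
        have := congrArg (Polynomial.eval y) hg
        simp only [eval_sub, eval_mul, eval_X, eval_C, hf1] at this
        simp only [eval_neg]
        linarith
      rw [e, eLpNorm_poly hmom]
      refine le_trans ?_ hδ
      gcongr
      exact (Real.sqrt_le_left hδ0.le).2 hf2.le
    · intro g
      have e : (fun y => (y - (-η⁻¹ - s)) * g.eval y) =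
          fun y => ((X - C (-η⁻¹ - s)) * g).eval y := by
        funext y; simp
      rw [e, eLpNorm_poly hmom, eLpNorm_poly hmom, ← ENNReal.ofReal_mul (by positivity)]
      refine ENNReal.ofReal_le_ofReal ?_
      rw [inv_mul_eq_div, le_div_iff₀ hs]
      refine Real.le_sqrt_of_sq_le ?_
      rw [mul_pow, Real.sq_sqrt (hsq g)]
      have h1 := L_pos (L := L) (β := η⁻¹) ha hc0 hc hβ hrec hLorth hP0 hL1 g
      have h2 := hsq ((X + C η⁻¹) * g)
      have e2 : (X - C (-η⁻¹ - s)) * g * ((X - C (-η⁻¹ - s)) * g) =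
          (X + C η⁻¹) * g * ((X + C η⁻¹) * g) + (2 * s) • ((X + C η⁻¹) * (g * g))
            + (s ^ 2) • (g * g) := by
        have h22 : (C 2 : ℝ[X]) = 2 := rfl
        simp only [smul_eq_C_mul, C_sub, C_neg, C_mul, C_pow, h22]
        ring
      change _ ≤ L _
      rw [e2, map_add, map_add, map_smul, map_smul, smul_eq_mul, smul_eq_mul]
      have : 0 ≤ 2 * s * L ((X + C η⁻¹) * (g * g)) := by positivity
      change L (g * g) * s ^ 2 ≤ _
      linarith
  have hall : ∀ᵐ y ∂μ, ∀ n : ℕ, (n : ℝ) + 1 ≤ |y - (-η⁻¹ - ((n : ℝ) + 1))| :=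
    ae_all_iff.2 fun n => hmain _ (by positivity)
  have hfin : ∀ᵐ y ∂μ, ¬ y < -(1 / η) := by
    filter_upwards [hall] with y hy hlt
    rw [one_div] at hlt
    obtain ⟨n, hn⟩ := exists_nat_gt (-η⁻¹ - y)
    have h1 := hy n
    have hn0 : (0 : ℝ) ≤ n := Nat.cast_nonneg n
    have h2 : |y - (-η⁻¹ - ((n : ℝ) + 1))| < (n : ℝ) + 1 := by
      rw [abs_lt]; constructor <;> linarith
    linarith
  rw [ae_iff] at hfin
  simp only [not_not] at hfin
  exact hfin
end
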